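/- arXiv:0810.3147 — 3 statements merged into one kernel-verified Lean document; each statement's English description precedes it below -/
import Mathlib

section
/- Let A be the ring of integers of a number field k. There exists a constant C_1 > 0 such that for every nonzero ideal 𝔞 ⊆ A with |𝔞| ≥ 16, θ(𝔞) ≤ C_1·log log |𝔞|. -/
/-!
The proof splits the primes dividing `𝔞` at `x = log |𝔞|`.

* Primes with `|𝔭| > x`: the product of their norms is at most `|𝔞| = e ^ x`, so there are at most
  `x / log x` of them, each with a factor `1 + O(1 / x)`. They contribute `O(1)`
  (`prod_large_le`).
* Primes with `|𝔭| ≤ x`: by the upper half of Mertens' third theorem for `k`, the full product of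
  `(1 - 1 / |𝔭|)⁻¹` over these primes is `O(log x) = O(log log |𝔞|)` (`exists_mertens`).

The Mertens bound compares the product at `s = 1` with that at `s = 1 + 1 / log x`. The latter is
at most the Dedekind zeta function at `s`, which is `O(1 / (s - 1)) = O(log x)` because the number
of ideals of norm at most `n` is `O(n)` (`exists_sum_rpow_le`, `prod_one_add_le`). The change of
exponent costs a factor `exp ((1 / log x) * ∑ log |𝔭| / |𝔭|)`, and
`∑ log |𝔭| / |𝔭| = O(log x)` over `|𝔭| ≤ x` follows from the corresponding bound over `ℤ`
(`sum_log_absNorm_div_le`, `sum_log_div_le`).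
-/

open scoped NumberField

/-- The absolute norm `|𝔞|` of an ideal `𝔞 ⊆ A`: the cardinality of `A ⧸ 𝔞`. -/
noncomputable def idealNorm {A : Type*} [CommRing A] (𝔞 : Ideal A) : ℕ := Nat.card (A ⧸ 𝔞)

/-- The set of nonzero prime ideals of `A` dividing `𝔞`. -/
def primesDvd {A : Type*} [CommRing A] (𝔞 : Ideal A) : Set (Ideal A) :=
  {𝔭 | 𝔭.IsPrime ∧ 𝔭 ≠ ⊥ ∧ 𝔭 ∣ 𝔞}

/-- `θ(𝔞) = ∏_{𝔭 ∣ 𝔞} (1 - 1/|𝔭|)⁻¹`, the product over the nonzero primes dividing `𝔞`. -/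
noncomputable def theta {A : Type*} [CommRing A] (𝔞 : Ideal A) : ℝ :=
  ∏ᶠ 𝔭 ∈ primesDvd 𝔞, (1 - (idealNorm 𝔭 : ℝ)⁻¹)⁻¹

namespace ThetaBound

open Finset

/-! ### Mertens' first theorem over `ℤ` -/

/-- A weak form of Mertens' first theorem over `ℤ`: take logarithms in
`∏_{p ≤ n} p ^ ⌊n / p⌋ ∣ n!` and use `∏_{p ≤ n} p ≤ 4 ^ n` to remove the floors. -/
lemma sum_log_div_le (n : ℕ) (hn : 1 ≤ n) :
    ∑ p ∈ Nat.primesLE n, Real.log p / p ≤ Real.log n + Real.log 4 := by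
  have hpr : ∀ p ∈ Nat.primesLE n, p.Prime := fun p hp => Nat.prime_of_mem_primesLE hp
  have hdvd : ∏ p ∈ Nat.primesLE n, p ^ (n / p) ∣ n.factorial := by
    refine Finset.prod_dvd_of_isRelPrime ?_ ?_
    · intro p hp q hq hpq
      exact Nat.coprime_iff_isRelPrime.mp
        (Nat.Coprime.pow _ _ ((Nat.coprime_primes (hpr p hp) (hpr q hq)).mpr hpq))
    · intro p hp
      rw [(hpr p hp).pow_dvd_factorial_iff (b := Nat.log p n + 2) (by omega)]
      have h1 : 1 ∈ Finset.Ico 1 (Nat.log p n + 2) := by simp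
      simpa using Finset.single_le_sum (f := fun i => n / p ^ i) (fun _ _ => Nat.zero_le _) h1
  have hle : ∏ p ∈ Nat.primesLE n, p ^ (n / p) ≤ n ^ n :=
    (Nat.le_of_dvd n.factorial_pos hdvd).trans n.factorial_le_pow
  have hlog : ∑ p ∈ Nat.primesLE n, ((n / p : ℕ) : ℝ) * Real.log p ≤ n * Real.log n := by
    have h : Real.log ((∏ p ∈ Nat.primesLE n, p ^ (n / p) : ℕ) : ℝ) ≤ Real.log ((n ^ n : ℕ) : ℝ) := by
      apply Real.log_le_log
      · exact_mod_cast Finset.prod_pos fun p hp => pow_pos (hpr p hp).pos _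
      · exact_mod_cast hle
    push_cast at h
    rw [Real.log_prod (fun p hp => by
      have := (hpr p hp).ne_zero
      positivity)] at h
    simpa [Real.log_pow] using h
  have hth : ∑ p ∈ Nat.primesLE n, Real.log p ≤ n * Real.log 4 := by
    have h := Chebyshev.theta_le_log4_mul_x (x := n) (by positivity)
    rw [Chebyshev.theta_eq_sum_primesLE_log] at h
    linarith
  have hn0 : (0 : ℝ) < n := by exact_mod_cast hn
  have key : n * ∑ p ∈ Nat.primesLE n, Real.log p / p
      ≤ ∑ p ∈ Nat.primesLE n, ((n / p : ℕ) : ℝ) * Real.log p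
        + ∑ p ∈ Nat.primesLE n, Real.log p := by
    rw [Finset.mul_sum, ← Finset.sum_add_distrib]
    refine Finset.sum_le_sum fun p hp => ?_
    have hp0 : (0 : ℝ) < p := by exact_mod_cast (hpr p hp).pos
    have hfl : (n : ℝ) / p ≤ ((n / p : ℕ) : ℝ) + 1 := by
      rw [← Nat.floor_div_eq_div (K := ℝ)]
      exact (Nat.lt_floor_add_one _).le
    have hl : 0 ≤ Real.log (p : ℝ) := Real.log_natCast_nonneg p
    calc (n : ℝ) * (Real.log p / p) = (n / p) * Real.log p := by ring
      _ ≤ (((n / p : ℕ) : ℝ) + 1) * Real.log p := by gcongr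
      _ = _ := by ring
  have : n * ∑ p ∈ Nat.primesLE n, Real.log p / p ≤ n * (Real.log n + Real.log 4) := by linarith
  exact le_of_mul_le_mul_left this hn0

/-! ### The sum of `log |𝔭| / |𝔭|` over the primes of `k` -/

variable {k : Type*} [Field k] [NumberField k]

lemma absNorm_pos {I : Ideal (𝓞 k)} (hI : I ≠ ⊥) : 0 < I.absNorm :=
  Nat.pos_of_ne_zero fun h => hI (Ideal.absNorm_eq_zero_iff.mp h)

lemma two_le_absNorm {P : Ideal (𝓞 k)} (hP : P.IsPrime) (h0 : P ≠ ⊥) : 2 ≤ P.absNorm := by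
  have h1 : P.absNorm ≠ 1 := fun h => hP.ne_top (Ideal.absNorm_eq_one_iff.mp h)
  have := absNorm_pos h0
  omega

lemma prod_absNorm_le {𝔞 : Ideal (𝓞 k)} (ha : 𝔞 ≠ ⊥) (S : Finset (Ideal (𝓞 k)))
    (hS : ∀ P ∈ S, P.IsPrime ∧ P ≠ ⊥) (hd : ∀ P ∈ S, P ∣ 𝔞) :
    ∏ P ∈ S, P.absNorm ≤ 𝔞.absNorm := by
  rw [← map_prod]
  refine Nat.le_of_dvd (absNorm_pos ha) (map_dvd _ ?_)
  exact Finset.prod_primes_dvd _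
    (fun P hP => Ideal.prime_of_isPrime (hS P hP).2 (hS P hP).1) hd

/-- Distinct primes above a rational prime `p` have norms at least `p` and product of norms at
most `|(p)| = p ^ [k : ℚ]`, so their contribution is at most `[k : ℚ] · log p / p`. -/
lemma sum_log_absNorm_div_le (x : ℝ) (hx : 1 ≤ x) (S : Finset (Ideal (𝓞 k)))
    (hS : ∀ P ∈ S, P.IsPrime ∧ P ≠ ⊥) (hle : ∀ P ∈ S, (P.absNorm : ℝ) ≤ x) :
    ∑ P ∈ S, Real.log P.absNorm / P.absNorm
      ≤ Module.finrank ℤ (𝓞 k) * (Real.log x + Real.log 4) := by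
  classical
  have hex : ∀ P ∈ S, ∃ p : ℕ, p.Prime ∧ (p : 𝓞 k) ∈ P ∧ p ≤ P.absNorm := by
    intro P hP
    have := (hS P hP).1.isMaximal (hS P hP).2
    obtain ⟨p, n, hn, hm, hp, he⟩ := Ideal.exists_prime_and_absNorm_eq_pow P
    exact ⟨p, hp, hm, he ▸ Nat.le_self_pow hn.ne' p⟩
  choose! f hf using hex
  have hn : 1 ≤ ⌊x⌋₊ := by rwa [Nat.one_le_floor_iff]
  have hmaps : ∀ P ∈ S, f P ∈ Nat.primesLE ⌊x⌋₊ := by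
    intro P hP
    rw [Nat.mem_primesLE]
    refine ⟨Nat.le_floor ?_, (hf P hP).1⟩
    exact le_trans (by exact_mod_cast (hf P hP).2.2) (hle P hP)
  rw [← Finset.sum_fiberwise_of_maps_to hmaps]
  have hfib : ∀ p ∈ Nat.primesLE ⌊x⌋₊,
      ∑ P ∈ S with f P = p, Real.log P.absNorm / P.absNorm
        ≤ Module.finrank ℤ (𝓞 k) * (Real.log p / p) := by
    intro p hp
    have hpp := Nat.prime_of_mem_primesLE hp
    have hp0 : (0 : ℝ) < p := by exact_mod_cast hpp.pos
    have hprod := prod_absNorm_le (𝔞 := Ideal.span {(p : 𝓞 k)})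
      (by simpa using hpp.ne_zero) (S.filter fun P => f P = p)
      (fun P hP => hS P (Finset.mem_filter.mp hP).1)
      (fun P hP => by
        obtain ⟨h1, h2⟩ := Finset.mem_filter.mp hP
        rw [Ideal.dvd_span_singleton, ← h2]
        exact (hf P h1).2.1)
    rw [Ideal.absNorm_span_natCast] at hprod
    have hne : ∀ P ∈ S.filter fun P => f P = p, (P.absNorm : ℝ) ≠ 0 := fun P hP => by
      exact_mod_cast (absNorm_pos (hS P (Finset.mem_filter.mp hP).1).2).ne'
    have hlog : ∑ P ∈ S with f P = p, Real.log P.absNorm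
        ≤ Module.finrank ℤ (𝓞 k) * Real.log p := by
      rw [← Real.log_prod hne, ← Real.log_pow]
      refine Real.log_le_log (Finset.prod_pos fun P hP =>
        lt_of_le_of_ne (Nat.cast_nonneg _) (hne P hP).symm) (by exact_mod_cast hprod)
    calc ∑ P ∈ S with f P = p, Real.log P.absNorm / P.absNorm
        ≤ ∑ P ∈ S with f P = p, Real.log P.absNorm / p := by
          refine Finset.sum_le_sum fun P hP => ?_
          obtain ⟨h1, h2⟩ := Finset.mem_filter.mp hP
          have : (p : ℝ) ≤ P.absNorm := by exact_mod_cast h2 ▸ (hf P h1).2.2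
          have := Real.log_natCast_nonneg P.absNorm
          gcongr
      _ = (∑ P ∈ S with f P = p, Real.log P.absNorm) / p := by rw [Finset.sum_div]
      _ ≤ (Module.finrank ℤ (𝓞 k) * Real.log p) / p := by gcongr
      _ = _ := by ring
  refine (Finset.sum_le_sum hfib).trans ?_
  rw [← Finset.mul_sum]
  refine mul_le_mul_of_nonneg_left ((sum_log_div_le _ hn).trans ?_) (Nat.cast_nonneg _)
  have : Real.log (⌊x⌋₊ : ℝ) ≤ Real.log x :=
    Real.log_le_log (by exact_mod_cast hn) (Nat.floor_le (by linarith))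
  linarith

/-! ### Upper bounds for the Dedekind zeta function near `1` -/

variable (k) in
/-- The number of ideals of norm at most `n` is `O(n)`. -/
lemma exists_card_le : ∃ c : ℝ, 0 < c ∧ ∀ n : ℕ, 1 ≤ n → ∀ F : Finset (Ideal (𝓞 k)),
    (∀ I ∈ F, I.absNorm ≤ n) → (#F : ℝ) ≤ c * n := by
  obtain ⟨c, hc⟩ := ((NumberField.Ideal.tendsto_norm_le_div_atTop k).comp
    tendsto_natCast_atTop_atTop).bddAbove_range
  refine ⟨max c 1, by positivity, fun n hn F hF => ?_⟩
  have h := hc ⟨n, rfl⟩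
  have hn0 : (0 : ℝ) < n := by exact_mod_cast hn
  simp only [Function.comp_apply, Nat.cast_le] at h
  rw [div_le_iff₀ hn0] at h
  have hfin := Ideal.finite_setOfPred_absNorm_le (S := 𝓞 k) n
  have hcard : #F ≤ Nat.card {I : Ideal (𝓞 k) // I.absNorm ≤ n} := by
    rw [← Set.ncard_coe_finset]
    exact Set.ncard_le_ncard (t := {I : Ideal (𝓞 k) | I.absNorm ≤ n}) (fun I hI => hF I hI) hfin
  calc (#F : ℝ) ≤ Nat.card {I : Ideal (𝓞 k) // I.absNorm ≤ n} := by exact_mod_cast hcard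
    _ ≤ c * n := h
    _ ≤ max c 1 * n := by gcongr; exact le_max_left _ _

variable (k) in
/-- The bound `ζ_k(1 + t) ≤ C / t`, stated for finite partial sums of the Dedekind zeta function
and proved by a dyadic decomposition from the linear bound on the number of ideals. -/
lemma exists_sum_rpow_le : ∃ C : ℝ, 0 < C ∧ ∀ t : ℝ, 0 < t → t ≤ 1 →
    ∀ F : Finset (Ideal (𝓞 k)), (∀ I ∈ F, I ≠ ⊥) →
      ∑ I ∈ F, (I.absNorm : ℝ) ^ (-(1 + t)) ≤ C / t := by
  classical
  obtain ⟨c, hc, hcard⟩ := exists_card_le k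
  refine ⟨4 * c, by positivity, fun t ht ht1 F hF => ?_⟩
  set r : ℝ := (1 / 2 : ℝ) ^ t with hr
  have hr0 : 0 < r := by positivity
  -- Bernoulli's inequality for the exponent `t ∈ [0, 1]`
  have hr1 : r ≤ 1 - t / 2 := by
    have := rpow_one_add_le_one_add_mul_self (s := -(1 / 2 : ℝ)) (by norm_num) ht.le ht1
    have e : (1 + -(1 / 2) : ℝ) = 1 / 2 := by norm_num
    rw [e] at this
    linarith
  obtain ⟨J, hJ⟩ : ∃ J : ℕ, ∀ I ∈ F, Nat.log 2 I.absNorm ∈ Finset.range J :=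
    ⟨(F.sup fun I => Nat.log 2 I.absNorm) + 1, fun I hI =>
      Finset.mem_range.mpr (Nat.lt_succ_of_le
        (Finset.le_sup (f := fun I : Ideal (𝓞 k) => Nat.log 2 I.absNorm) hI))⟩
  rw [← Finset.sum_fiberwise_of_maps_to hJ]
  have hfib : ∀ j ∈ Finset.range J,
      ∑ I ∈ F with Nat.log 2 I.absNorm = j, (I.absNorm : ℝ) ^ (-(1 + t)) ≤ 2 * c * r ^ j := by
    intro j _
    have hb : ∀ I ∈ F.filter (fun I => Nat.log 2 I.absNorm = j),
        (I.absNorm : ℝ) ^ (-(1 + t)) ≤ ((2 : ℝ) ^ j) ^ (-(1 + t)) := by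
      intro I hI
      obtain ⟨h1, h2⟩ := Finset.mem_filter.mp hI
      refine Real.rpow_le_rpow_of_nonpos (by positivity) ?_ (by linarith)
      have := Nat.pow_log_le_self 2 (absNorm_pos (hF I h1)).ne'
      rw [h2] at this
      exact_mod_cast this
    have hn := hcard (2 ^ (j + 1)) Nat.one_le_two_pow (F.filter fun I => Nat.log 2 I.absNorm = j)
      (fun I hI => by
        obtain ⟨h1, h2⟩ := Finset.mem_filter.mp hI
        have := Nat.lt_pow_succ_log_self (b := 2) (by norm_num) I.absNorm
        rw [h2] at this
        exact this.le)
    refine (Finset.sum_le_card_nsmul _ _ _ hb).trans ?_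
    rw [nsmul_eq_mul]
    have e : ((2 : ℝ) ^ j) ^ (-(1 + t)) = ((2 : ℝ) ^ j)⁻¹ * r ^ j := by
      have h2 : r = (2 : ℝ) ^ (-t) := by
        rw [hr, one_div, Real.inv_rpow (by norm_num), Real.rpow_neg (by norm_num)]
      rw [neg_add, Real.rpow_add (by positivity), Real.rpow_neg_one, h2,
        Real.rpow_pow_comm (by norm_num)]
    rw [e]
    calc _ ≤ (c * ((2 ^ (j + 1) : ℕ) : ℝ)) * (((2 : ℝ) ^ j)⁻¹ * r ^ j) := by gcongr
      _ = 2 * c * r ^ j := by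
        push_cast
        field_simp
        ring
  refine (Finset.sum_le_sum hfib).trans ?_
  rw [← Finset.mul_sum]
  have hgeom : ∑ j ∈ Finset.range J, r ^ j ≤ (t / 2)⁻¹ := by
    calc ∑ j ∈ Finset.range J, r ^ j ≤ ∑' j, r ^ j :=
          (summable_geometric_of_lt_one hr0.le (by linarith)).sum_le_tsum _
            (fun _ _ => by positivity)
      _ = (1 - r)⁻¹ := tsum_geometric_of_lt_one hr0.le (by linarith)
      _ ≤ (t / 2)⁻¹ := inv_anti₀ (by positivity) (by linarith)
  calc 2 * c * ∑ j ∈ Finset.range J, r ^ j ≤ 2 * c * (t / 2)⁻¹ := by gcongr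
    _ = 4 * c / t := by field_simp; ring

/-- Expanding a finite product `∏ (1 + |𝔭| ^ s)` gives a sum of `|I| ^ s` over distinct squarefree
ideals `I`, hence a partial sum of the Dedekind zeta function at `-s`. -/
lemma prod_one_add_le {B s : ℝ}
    (hB : ∀ F : Finset (Ideal (𝓞 k)), (∀ I ∈ F, I ≠ ⊥) → ∑ I ∈ F, (I.absNorm : ℝ) ^ s ≤ B)
    (S : Finset (Ideal (𝓞 k))) (hS : ∀ P ∈ S, P.IsPrime ∧ P ≠ ⊥) :
    ∏ P ∈ S, (1 + (P.absNorm : ℝ) ^ s) ≤ B := by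
  classical
  have hprime : ∀ P ∈ S, Prime P := fun P hP => Ideal.prime_of_isPrime (hS P hP).2 (hS P hP).1
  have hsub : ∀ T ∈ S.powerset, ∀ T' ∈ S.powerset, ∏ P ∈ T, P = ∏ P ∈ T', P → T ⊆ T' := by
    intro T hT T' hT' h P hP
    rw [Finset.mem_powerset] at hT hT'
    have hd : P ∣ ∏ Q ∈ T', Q := h ▸ Finset.dvd_prod_of_mem _ hP
    obtain ⟨Q, hQ, hPQ⟩ := (hprime P (hT hP)).exists_mem_finset_dvd hd
    have : P = Q := associated_iff_eq.mp
      ((hprime P (hT hP)).associated_of_dvd (hprime Q (hT' hQ)) hPQ)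
    exact this ▸ hQ
  have hinj : Set.InjOn (fun T : Finset (Ideal (𝓞 k)) => ∏ P ∈ T, P) S.powerset :=
    fun T hT T' hT' h => (hsub T hT T' hT' h).antisymm (hsub T' hT' T hT h.symm)
  refine le_trans (le_of_eq ?_) (hB (S.powerset.image fun T => ∏ P ∈ T, P) ?_)
  · rw [Finset.sum_image hinj, Finset.prod_one_add]
    refine Finset.sum_congr rfl fun T _ => ?_
    rw [map_prod, Nat.cast_prod, Real.finsetProd_rpow _ _ fun _ _ => Nat.cast_nonneg _]
  · intro I hI
    obtain ⟨T, hT, rfl⟩ := Finset.mem_image.mp hI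
    rw [Finset.mem_powerset] at hT
    exact Finset.prod_ne_zero_iff.mpr fun P hP => (hS P (hT hP)).2

/-! ### Mertens' third theorem for `k` -/

lemma inv_one_sub_le_exp {u : ℝ} (h0 : 0 ≤ u) (h1 : u ≤ 1 / 2) :
    (1 - u)⁻¹ ≤ Real.exp (2 * u) := by
  rw [inv_le_iff_one_le_mul₀ (by linarith)]
  nlinarith [Real.add_one_le_exp (2 * u)]

lemma inv_one_sub_le {u v : ℝ} (h0 : 0 ≤ v) (huv : v ≤ u) (h1 : u ≤ 1 / 2) :
    (1 - u)⁻¹ ≤ (1 + v) * Real.exp (u - v) * Real.exp (2 * u ^ 2) := by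
  have e : (1 - u)⁻¹ = (1 + u) * (1 - u ^ 2)⁻¹ := by
    have : 1 - u ≠ 0 := by linarith
    have : 1 - u ^ 2 ≠ 0 := by nlinarith
    field_simp
    ring
  have h2 : (1 - u ^ 2)⁻¹ ≤ Real.exp (2 * u ^ 2) := inv_one_sub_le_exp (by positivity) (by nlinarith)
  have h3 : 1 + u ≤ (1 + v) * Real.exp (u - v) := by
    nlinarith [Real.add_one_le_exp (u - v)]
  have h4 : 0 ≤ (1 - u ^ 2)⁻¹ := inv_nonneg.mpr (by nlinarith)
  rw [e]
  gcongr

lemma inv_absNorm_le {P : Ideal (𝓞 k)} (hP : P.IsPrime ∧ P ≠ ⊥) :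
    (P.absNorm : ℝ)⁻¹ ≤ 1 / 2 := by
  rw [one_div]
  exact inv_anti₀ (by norm_num) (by exact_mod_cast two_le_absNorm hP.1 hP.2)

variable (k) in
/-- The upper bound in Mertens' third theorem for `k`. Each factor is compared with its analogue
at `s = 1 + 1 / log x`: the product there is `O(log x)` by the bound on the zeta function, and the
change from `1` to `s` costs `O(1 / log x) · ∑ log |𝔭| / |𝔭| = O(1)` in the exponent. -/
lemma exists_mertens : ∃ C : ℝ, 0 < C ∧ ∀ x : ℝ, 1 ≤ Real.log x →
    ∀ S : Finset (Ideal (𝓞 k)), (∀ P ∈ S, P.IsPrime ∧ P ≠ ⊥) →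
      (∀ P ∈ S, (P.absNorm : ℝ) ≤ x) → 1 ≤ x →
      ∏ P ∈ S, (1 - (P.absNorm : ℝ)⁻¹)⁻¹ ≤ C * Real.log x := by
  obtain ⟨C, hC, hsum⟩ := exists_sum_rpow_le k
  set d : ℝ := ((Module.finrank ℤ (𝓞 k) : ℕ) : ℝ) with hd
  have hd0 : 0 ≤ d := Nat.cast_nonneg _
  have hl4 : 0 ≤ Real.log 4 := Real.log_nonneg (by norm_num)
  refine ⟨C * Real.exp (d * (1 + Real.log 4)) * Real.exp (2 * C), by positivity,
    fun x hlx S hS hle hx => ?_⟩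
  have hL : 0 < Real.log x := by linarith
  set t : ℝ := (Real.log x)⁻¹ with ht
  have ht0 : 0 < t := by positivity
  have ht1 : t ≤ 1 := inv_le_one_of_one_le₀ hlx
  have hpos : ∀ P ∈ S, (2 : ℝ) ≤ P.absNorm := fun P hP => by
    exact_mod_cast two_le_absNorm (hS P hP).1 (hS P hP).2
  have hv : ∀ P ∈ S, (P.absNorm : ℝ) ^ (-(1 + t)) ≤ (P.absNorm : ℝ)⁻¹ := fun P hP => by
    rw [← Real.rpow_neg_one]
    exact Real.rpow_le_rpow_of_exponent_le (by linarith [hpos P hP]) (by linarith)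
  have hdiff : ∀ P ∈ S, (P.absNorm : ℝ)⁻¹ - (P.absNorm : ℝ) ^ (-(1 + t))
      ≤ t * (Real.log P.absNorm / P.absNorm) := fun P hP => by
    have h2 := hpos P hP
    have h0 : (0 : ℝ) < P.absNorm := by linarith
    rw [neg_add, Real.rpow_add h0, Real.rpow_neg_one, Real.rpow_def_of_pos h0]
    have := Real.add_one_le_exp (Real.log P.absNorm * -t)
    have hi : (0 : ℝ) ≤ (P.absNorm : ℝ)⁻¹ := by positivity
    rw [div_eq_mul_inv]
    nlinarith
  have h1 : ∏ P ∈ S, (1 + (P.absNorm : ℝ) ^ (-(1 + t))) ≤ C * Real.log x := by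
    have := prod_one_add_le (hsum t ht0 ht1) S hS
    rwa [ht, div_inv_eq_mul] at this
  have h2 : ∑ P ∈ S, ((P.absNorm : ℝ)⁻¹ - (P.absNorm : ℝ) ^ (-(1 + t)))
      ≤ d * (1 + Real.log 4) := by
    refine (Finset.sum_le_sum hdiff).trans ?_
    rw [← Finset.mul_sum]
    calc _ ≤ t * (d * (Real.log x + Real.log 4)) := by
          gcongr
          exact sum_log_absNorm_div_le x hx S hS hle
      _ = d * (t * Real.log x + t * Real.log 4) := by ring
      _ ≤ d * (1 + Real.log 4) := by
          have : t * Real.log x = 1 := inv_mul_cancel₀ hL.ne'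
          rw [this]
          gcongr
          nlinarith
  have h3 : ∑ P ∈ S, 2 * (P.absNorm : ℝ)⁻¹ ^ 2 ≤ 2 * C := by
    rw [← Finset.mul_sum]
    have := hsum 1 one_pos le_rfl S fun P hP => (hS P hP).2
    rw [div_one] at this
    refine mul_le_mul_of_nonneg_left (le_trans (le_of_eq ?_) this) (by norm_num)
    refine Finset.sum_congr rfl fun P hP => ?_
    rw [Real.rpow_neg (Nat.cast_nonneg _), inv_pow]
    norm_num
  calc ∏ P ∈ S, (1 - (P.absNorm : ℝ)⁻¹)⁻¹
      ≤ ∏ P ∈ S, ((1 + (P.absNorm : ℝ) ^ (-(1 + t)))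
          * Real.exp ((P.absNorm : ℝ)⁻¹ - (P.absNorm : ℝ) ^ (-(1 + t)))
          * Real.exp (2 * (P.absNorm : ℝ)⁻¹ ^ 2)) := by
        refine Finset.prod_le_prod (fun P hP => inv_nonneg.mpr ?_) fun P hP =>
          inv_one_sub_le (by positivity) (hv P hP) (inv_absNorm_le (hS P hP))
        linarith [inv_absNorm_le (hS P hP)]
    _ = (∏ P ∈ S, (1 + (P.absNorm : ℝ) ^ (-(1 + t))))
          * Real.exp (∑ P ∈ S, ((P.absNorm : ℝ)⁻¹ - (P.absNorm : ℝ) ^ (-(1 + t))))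
          * Real.exp (∑ P ∈ S, 2 * (P.absNorm : ℝ)⁻¹ ^ 2) := by
        rw [Finset.prod_mul_distrib, Finset.prod_mul_distrib, Real.exp_sum, Real.exp_sum]
    _ ≤ (C * Real.log x) * Real.exp (d * (1 + Real.log 4)) * Real.exp (2 * C) := by
        gcongr
    _ = _ := by ring

/-! ### Primes of large norm -/

/-- The primes of norm greater than `x = log |𝔞|` dividing `𝔞` number at most `x / log x`, so they
contribute a bounded factor. -/
lemma prod_large_le {𝔞 : Ideal (𝓞 k)} (ha : 𝔞 ≠ ⊥) {x : ℝ} (hx : Real.log 𝔞.absNorm = x)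
    (hx0 : 0 < x) (hlx : 1 ≤ Real.log x) (S : Finset (Ideal (𝓞 k)))
    (hS : ∀ P ∈ S, P.IsPrime ∧ P ≠ ⊥) (hd : ∀ P ∈ S, P ∣ 𝔞)
    (hlt : ∀ P ∈ S, x < (P.absNorm : ℝ)) :
    ∏ P ∈ S, (1 - (P.absNorm : ℝ)⁻¹)⁻¹ ≤ Real.exp 2 := by
  have hN : (∏ P ∈ S, (P.absNorm : ℝ)) ≤ 𝔞.absNorm := by
    exact_mod_cast prod_absNorm_le ha S hS hd
  have hcard : (#S : ℝ) * Real.log x ≤ x := by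
    have h1 : x ^ #S ≤ (𝔞.absNorm : ℝ) :=
      le_trans (by
        rw [← Finset.prod_const]
        exact Finset.prod_le_prod (fun _ _ => hx0.le) fun P hP => (hlt P hP).le) hN
    have := Real.log_le_log (by positivity) h1
    rwa [Real.log_pow, hx] at this
  have hcx : (#S : ℝ) ≤ x := by nlinarith [Nat.cast_nonneg (α := ℝ) #S]
  calc ∏ P ∈ S, (1 - (P.absNorm : ℝ)⁻¹)⁻¹
      ≤ ∏ P ∈ S, Real.exp (2 * x⁻¹) := by
        refine Finset.prod_le_prod (fun P hP => inv_nonneg.mpr ?_) fun P hP => ?_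
        · linarith [inv_absNorm_le (hS P hP)]
        · refine (inv_one_sub_le_exp (by positivity) (inv_absNorm_le (hS P hP))).trans ?_
          have := inv_anti₀ hx0 (hlt P hP).le
          gcongr
    _ = Real.exp (#S * (2 * x⁻¹)) := by rw [Finset.prod_const, ← Real.exp_nat_mul]
    _ ≤ Real.exp 2 := by
        gcongr
        calc (#S : ℝ) * (2 * x⁻¹) ≤ x * (2 * x⁻¹) := by gcongr
          _ = 2 := by field_simp

lemma primesDvd_finite {𝔞 : Ideal (𝓞 k)} (ha : 𝔞 ≠ ⊥) : (primesDvd 𝔞).Finite :=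
  (Ideal.finite_setOfPred_absNorm_le (S := 𝓞 k) 𝔞.absNorm).subset fun _ hP =>
    Nat.le_of_dvd (absNorm_pos ha) (map_dvd _ hP.2.2)

lemma idealNorm_eq (𝔞 : Ideal (𝓞 k)) : idealNorm 𝔞 = 𝔞.absNorm := rfl

end ThetaBound

/-- **Lemma (upper bound for θ).**
Let `A` be the ring of integers of a number field `k`. There is a constant `C₁ > 0` such
that `θ(𝔞) ≤ C₁ · log log |𝔞|` for every nonzero ideal `𝔞 ⊆ A` with `|𝔞| ≥ 16`. -/
theorem theta_upper_bound (k : Type*) [Field k] [NumberField k] :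
    ∃ C₁ : ℝ, 0 < C₁ ∧ ∀ 𝔞 : Ideal (𝓞 k), 𝔞 ≠ ⊥ → 16 ≤ idealNorm 𝔞 →
      theta 𝔞 ≤ C₁ * Real.log (Real.log (idealNorm 𝔞)) := by
  classical
  obtain ⟨C, hC, hmert⟩ := ThetaBound.exists_mertens k
  refine ⟨C * Real.exp 2, by positivity, fun 𝔞 ha h16 => ?_⟩
  rw [ThetaBound.idealNorm_eq] at h16 ⊢
  have hfin := ThetaBound.primesDvd_finite ha
  set x : ℝ := Real.log 𝔞.absNorm with hx
  -- `exp 1 < 2.7183 < 4 * log 2 = log 16`, so that `log x ≥ 1`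
  have hxe : Real.exp 1 ≤ x := by
    have h1 : Real.log ((2 : ℝ) ^ 4) ≤ x :=
      Real.log_le_log (by norm_num) (by norm_num; exact_mod_cast h16)
    rw [Real.log_pow] at h1
    push_cast at h1
    linarith [Real.exp_one_lt_d9, Real.log_two_gt_d9]
  have hx0 : 0 < x := (Real.exp_pos 1).trans_le hxe
  have hlx : 1 ≤ Real.log x := (Real.le_log_iff_exp_le hx0).mpr hxe
  have hx1 : 1 ≤ x := by linarith [Real.add_one_le_exp (1 : ℝ)]
  have hmem : ∀ P ∈ hfin.toFinset, (P.IsPrime ∧ P ≠ ⊥) ∧ P ∣ 𝔞 := fun P hP => by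
    obtain ⟨h1, h2, h3⟩ := hfin.mem_toFinset.mp hP
    exact ⟨⟨h1, h2⟩, h3⟩
  have hsmall := hmert x hlx (hfin.toFinset.filter fun P => (P.absNorm : ℝ) ≤ x)
    (fun P hP => (hmem P (Finset.mem_filter.mp hP).1).1)
    (fun P hP => (Finset.mem_filter.mp hP).2) hx1
  have hlarge := ThetaBound.prod_large_le ha hx.symm hx0 hlx
    (hfin.toFinset.filter fun P => ¬ (P.absNorm : ℝ) ≤ x)
    (fun P hP => (hmem P (Finset.mem_filter.mp hP).1).1)
    (fun P hP => (hmem P (Finset.mem_filter.mp hP).1).2)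
    (fun P hP => not_le.mp (Finset.mem_filter.mp hP).2)
  have htheta : theta 𝔞 = ∏ P ∈ hfin.toFinset, (1 - (P.absNorm : ℝ)⁻¹)⁻¹ := by
    rw [theta, finprod_mem_eq_finite_toFinset_prod _ hfin]
    rfl
  rw [htheta, ← Finset.prod_filter_mul_prod_filter_not _ fun P => (P.absNorm : ℝ) ≤ x]
  calc _ ≤ (C * Real.log x) * Real.exp 2 := by
        refine mul_le_mul hsmall hlarge (Finset.prod_nonneg fun P hP => inv_nonneg.mpr ?_)
          (by positivity)
        linarith [ThetaBound.inv_absNorm_le (hmem P (Finset.mem_filter.mp hP).1).1]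
    _ = _ := by ring
end

section
/- Let A be the ring of integers of a number field k, and for n ≥ 2 let 𝔞_n := ∏_{|𝔭| ≤ n} 𝔭 (the product over all nonzero prime ideals 𝔭 of A with |𝔭| ≤ n). Then there exists a constant C_2 > 0 such that for all n ≥ 2, θ(𝔞_n) ≥ C_2·log log |𝔞_n|. -/
/-!
The proof compares both sides with `log n`, and its only analytic input is the asymptotic count
of ideals: the number `N(m)` of nonzero ideals of norm at most `m` satisfies `N(m) / m → ρ > 0`,
so `c * m ≤ N(m) ≤ C * m` for all `m ≥ 1` (`exists_card_idealsUpTo_bounds`).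

* Lower bound for `θ`. The prime divisors of `𝔞_n` are exactly the primes of norm at most `n`, and
  every nonzero ideal of norm at most `n` factors into such primes. Expanding the geometric series
  in the finite Euler product gives `θ(𝔞_n) ≥ ∑_{|𝔞| ≤ n} 1 / |𝔞|`
  (`sum_inv_absNorm_le_prod_of_factors`). Partial summation and `N(m) ≥ c * m` bound this sum below by
  `(c / 2) * log n` (`log_le_sum_inv_absNorm`).
* Upper bound for `log log |𝔞_n|`. There are at most `N(n) ≤ C * n` primes of norm at most `n`, so
  `log |𝔞_n| ≤ C * n * log n ≤ C * n ^ 2`, whence `log log |𝔞_n| ≤ log C + 2 * log n`.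
-/

open scoped NumberField

/-- The ideal `𝔞_n`, the product of all nonzero prime ideals `𝔭 ⊆ A` with `|𝔭| ≤ n`. -/
noncomputable def primeProdUpTo (A : Type*) [CommRing A] (n : ℕ) : Ideal A :=
  ∏ᶠ 𝔭 ∈ {𝔭 : Ideal A | 𝔭.IsPrime ∧ 𝔭 ≠ ⊥ ∧ idealNorm 𝔭 ≤ n}, 𝔭

open Filter Topology Finset UniqueFactorizationMonoid

section

variable (k : Type*) [Field k] [NumberField k]

/-- The finite set of nonzero ideals of `𝓞 k` of norm at most `n`. -/
noncomputable def idealsUpTo (n : ℕ) : Finset (Ideal (𝓞 k)) :=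
  Set.Finite.toFinset (s := {I | I ≠ ⊥ ∧ Ideal.absNorm I ≤ n})
    ((Ideal.finite_setOfPred_absNorm_le n).subset fun _ h => h.2)

open Classical in
/-- The finite set of nonzero prime ideals of `𝓞 k` of norm at most `n`. -/
noncomputable def primesUpTo (n : ℕ) : Finset (Ideal (𝓞 k)) :=
  (idealsUpTo k n).filter fun I => I.IsPrime

variable {k}

lemma idealNorm_eq_absNorm (I : Ideal (𝓞 k)) : idealNorm I = Ideal.absNorm I := by
  rw [Ideal.absNorm_apply, Submodule.cardQuot_apply, idealNorm]

lemma mem_idealsUpTo {n : ℕ} {I : Ideal (𝓞 k)} :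
    I ∈ idealsUpTo k n ↔ I ≠ ⊥ ∧ Ideal.absNorm I ≤ n := by
  simp [idealsUpTo]

lemma mem_primesUpTo {n : ℕ} {I : Ideal (𝓞 k)} :
    I ∈ primesUpTo k n ↔ I.IsPrime ∧ I ≠ ⊥ ∧ Ideal.absNorm I ≤ n := by
  simp only [primesUpTo, mem_filter, mem_idealsUpTo]
  tauto

lemma one_le_absNorm {I : Ideal (𝓞 k)} (h : I ≠ ⊥) : 1 ≤ Ideal.absNorm I :=
  Nat.one_le_iff_ne_zero.mpr (mt Ideal.absNorm_eq_zero_iff.mp h)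

lemma one_lt_absNorm {I : Ideal (𝓞 k)} (h : I ≠ ⊥) (hp : I.IsPrime) : 1 < Ideal.absNorm I :=
  lt_of_le_of_ne (one_le_absNorm h) fun h1 => hp.ne_top (Ideal.absNorm_eq_one_iff.mp h1.symm)

lemma primeProdUpTo_eq_prod (n : ℕ) :
    primeProdUpTo (𝓞 k) n = ∏ p ∈ primesUpTo k n, p := by
  rw [primeProdUpTo, ← finprod_mem_coe_finset]
  congr! 3 with p
  simp [mem_primesUpTo, idealNorm_eq_absNorm]

lemma primesDvd_primeProdUpTo (n : ℕ) :
    primesDvd (primeProdUpTo (𝓞 k) n) = ↑(primesUpTo k n) := by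
  ext p
  rw [primeProdUpTo_eq_prod]
  constructor
  · rintro ⟨hp, h0, hd⟩
    obtain ⟨q, hq, hpq⟩ := ((Ideal.prime_iff_isPrime h0).mpr hp).exists_mem_finset_dvd hd
    have hq' := mem_primesUpTo.mp hq
    have hle := Ideal.le_of_dvd hpq
    -- nonzero primes are maximal, so one dividing another is equal to it
    have : q = p := (hq'.1.isMaximal hq'.2.1).eq_of_le hp.ne_top hle
    exact this ▸ hq
  · intro hp
    have hp' := mem_primesUpTo.mp hp
    exact ⟨hp'.1, hp'.2.1, Finset.dvd_prod_of_mem _ hp⟩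

lemma theta_primeProdUpTo (n : ℕ) : theta (primeProdUpTo (𝓞 k) n) =
    ∏ p ∈ primesUpTo k n, (1 - (Ideal.absNorm p : ℝ)⁻¹)⁻¹ := by
  rw [theta, primesDvd_primeProdUpTo, finprod_mem_coe_finset]
  simp only [idealNorm_eq_absNorm]

/-- For a finite set `S` of nonzero primes, the Euler product over `S` dominates the sum of `1 / |𝔞|`
over any finite set of ideals all of whose prime factors lie in `S`: truncate each geometric series
at an exponent exceeding all multiplicities that occur, multiply out, and send each ideal to its
family of multiplicities. -/
lemma sum_inv_absNorm_le_prod_of_factors (S T : Finset (Ideal (𝓞 k)))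
    (hS : ∀ p ∈ S, p.IsPrime ∧ p ≠ ⊥)
    (hT : ∀ I ∈ T, I ≠ ⊥ ∧ ∀ p ∈ normalizedFactors I, p ∈ S) :
    ∑ I ∈ T, (Ideal.absNorm I : ℝ)⁻¹ ≤ ∏ p ∈ S, (1 - (Ideal.absNorm p : ℝ)⁻¹)⁻¹ := by
  classical
  obtain ⟨K, hK⟩ : ∃ K : ℕ, ∀ I ∈ T, (normalizedFactors I).card < K :=
    ⟨T.sup (fun I => (normalizedFactors I).card) + 1, fun I hI =>
      Nat.lt_succ_of_le (Finset.le_sup (f := fun I => (normalizedFactors I).card) hI)⟩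
  obtain ⟨e, he⟩ : ∃ e : Ideal (𝓞 k) → S → ℕ,
      ∀ I p, e I p = (normalizedFactors I).count (p : Ideal (𝓞 k)) := ⟨_, fun _ _ => rfl⟩
  have hfac : ∀ I ∈ T, I = ∏ p : S, (p : Ideal (𝓞 k)) ^ e I p := by
    intro I hI
    simp only [he]
    rw [Finset.prod_coe_sort S fun p => p ^ (normalizedFactors I).count p,
      ← Finset.prod_multiset_count_of_subset _ S
        fun p hp => (hT I hI).2 p (Multiset.mem_toFinset.mp hp)]
    exact (Ideal.prod_normalizedFactors_eq_self (hT I hI).1).symm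
  have hinj : Set.InjOn e T := by
    intro I hI J hJ h
    rw [hfac I hI, hfac J hJ, h]
  calc ∑ I ∈ T, (Ideal.absNorm I : ℝ)⁻¹
      = ∑ I ∈ T, ∏ p : S, ((Ideal.absNorm (p : Ideal (𝓞 k)) : ℝ)⁻¹) ^ e I p := by
        refine Finset.sum_congr rfl fun I hI => ?_
        have h := congrArg (fun J => (Ideal.absNorm J : ℝ)⁻¹) (hfac I hI)
        simpa only [map_prod, map_pow, Nat.cast_prod, Nat.cast_pow, ← Finset.prod_inv_distrib,
          ← inv_pow] using h
    _ = ∑ f ∈ T.image e, ∏ p : S, ((Ideal.absNorm (p : Ideal (𝓞 k)) : ℝ)⁻¹) ^ f p := by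
        rw [Finset.sum_image hinj]
    _ ≤ ∑ f ∈ Fintype.piFinset fun _ : S => range K,
          ∏ p : S, ((Ideal.absNorm (p : Ideal (𝓞 k)) : ℝ)⁻¹) ^ f p := by
        refine Finset.sum_le_sum_of_subset_of_nonneg ?_ fun _ _ _ => by positivity
        intro f hf
        obtain ⟨I, hI, rfl⟩ := Finset.mem_image.mp hf
        refine Fintype.mem_piFinset.mpr fun p => mem_range.mpr ?_
        rw [he]
        exact (Multiset.count_le_card _ _).trans_lt (hK I hI)
    _ = ∏ p : S, ∑ j ∈ range K, ((Ideal.absNorm (p : Ideal (𝓞 k)) : ℝ)⁻¹) ^ j :=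
        (Finset.prod_univ_sum _ _).symm
    _ ≤ ∏ p : S, (1 - (Ideal.absNorm (p : Ideal (𝓞 k)) : ℝ)⁻¹)⁻¹ := by
        refine Finset.prod_le_prod (fun _ _ => by positivity) fun p _ => ?_
        obtain ⟨hp, h0⟩ := hS p p.2
        have h1 : (1 : ℝ) < Ideal.absNorm (p : Ideal (𝓞 k)) := by
          exact_mod_cast one_lt_absNorm h0 hp
        have h0' : (0 : ℝ) ≤ (Ideal.absNorm (p : Ideal (𝓞 k)) : ℝ)⁻¹ := by positivity
        have hlt := inv_lt_one_of_one_lt₀ h1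
        rw [← tsum_geometric_of_lt_one h0' hlt]
        exact (summable_geometric_of_lt_one h0' hlt).sum_le_tsum _ fun _ _ => by positivity
    _ = _ := Finset.prod_coe_sort S fun p => (1 - (Ideal.absNorm p : ℝ)⁻¹)⁻¹

lemma sum_inv_absNorm_le_prod (n : ℕ) :
    ∑ I ∈ idealsUpTo k n, (Ideal.absNorm I : ℝ)⁻¹ ≤
      ∏ p ∈ primesUpTo k n, (1 - (Ideal.absNorm p : ℝ)⁻¹)⁻¹ := by
  refine sum_inv_absNorm_le_prod_of_factors _ _
    (fun p hp => ⟨(mem_primesUpTo.mp hp).1, (mem_primesUpTo.mp hp).2.1⟩) fun I hI => ?_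
  obtain ⟨h0, hn⟩ := mem_idealsUpTo.mp hI
  refine ⟨h0, fun p hp => ?_⟩
  have hpr : Prime p := prime_of_normalized_factor p hp
  refine mem_primesUpTo.mpr ⟨Ideal.isPrime_of_prime hpr, hpr.ne_zero, le_trans ?_ hn⟩
  exact Nat.le_of_dvd (one_le_absNorm h0) (map_dvd Ideal.absNorm (dvd_of_mem_normalizedFactors hp))

variable (k) in
lemma exists_card_idealsUpTo_bounds : ∃ c C : ℝ, 0 < c ∧ 1 ≤ C ∧ ∀ m : ℕ, 1 ≤ m →
    c * m ≤ #(idealsUpTo k m) ∧ (#(idealsUpTo k m) : ℝ) ≤ C * m := by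
  have hcard : ∀ m : ℕ, Nat.card {I : nonZeroDivisors (Ideal (𝓞 k)) //
      (Ideal.absNorm (I : Ideal (𝓞 k)) : ℝ) ≤ (m : ℝ)} = #(idealsUpTo k m) := by
    intro m
    rw [← Nat.card_eq_finsetCard]
    exact Nat.card_congr
      { toFun := fun I => ⟨I.1.1, mem_idealsUpTo.mpr
          ⟨nonZeroDivisors.ne_zero I.1.2, by exact_mod_cast I.2⟩⟩
        invFun := fun I => ⟨⟨I.1, mem_nonZeroDivisors_of_ne_zero (mem_idealsUpTo.mp I.2).1⟩,
          by exact_mod_cast (mem_idealsUpTo.mp I.2).2⟩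
        left_inv := fun _ => rfl
        right_inv := fun _ => rfl }
  have hlim : Tendsto (fun m : ℕ => (#(idealsUpTo k m) : ℝ) / m) atTop
      (𝓝 (NumberField.dedekindZeta_residue k)) := by
    have h := (NumberField.Ideal.tendsto_norm_le_div_atTop₀ k).comp
      (tendsto_natCast_atTop_atTop (R := ℝ))
    rw [← NumberField.dedekindZeta_residue_def] at h
    refine h.congr fun m => ?_
    simp only [Function.comp_apply, hcard]
  have hpos := NumberField.dedekindZeta_residue_pos k
  obtain ⟨B, hB⟩ := hlim.bddAbove_range
  obtain ⟨M, hM⟩ := eventually_atTop.mp (hlim.eventually_const_lt (half_lt_self hpos))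
  refine ⟨min (NumberField.dedekindZeta_residue k / 2) (1 / (M + 1)), max B 1, ?_, le_max_right _ _,
    fun m hm => ?_⟩
  · positivity
  have hm0 : (0 : ℝ) < m := by exact_mod_cast hm
  rw [← le_div_iff₀ hm0, ← div_le_iff₀ hm0]
  refine ⟨?_, (hB ⟨m, rfl⟩).trans (le_max_left _ _)⟩
  rcases le_or_gt M m with h | h
  · exact (min_le_left _ _).trans (hM m h).le
  · refine (min_le_right _ _).trans ?_
    -- below the threshold, the unit ideal alone gives `N(m) ≥ 1`
    have h1 : (1 : ℝ) ≤ #(idealsUpTo k m) := by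
      exact_mod_cast Finset.card_pos.mpr ⟨⊤, mem_idealsUpTo.mpr ⟨top_ne_bot, by simpa using hm⟩⟩
    have h2 : (m : ℝ) ≤ M + 1 := by exact_mod_cast (by omega : m ≤ M + 1)
    gcongr

lemma sum_Icc_inv_mul_succ_le {a n : ℕ} (ha : 1 ≤ a) :
    ∑ m ∈ Icc a n, ((m : ℝ) * (m + 1))⁻¹ ≤ (a : ℝ)⁻¹ := by
  have ha0 : (0 : ℝ) < a := by exact_mod_cast ha
  rcases Nat.lt_or_ge n a with h | h
  · simp [Finset.Icc_eq_empty_of_lt h]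
  have key : ∑ m ∈ Icc a n, ((m : ℝ) * (m + 1))⁻¹ = (a : ℝ)⁻¹ - ((n : ℝ) + 1)⁻¹ := by
    induction n, h using Nat.le_induction with
    | base => simp; field_simp; ring
    | succ n hn ih =>
      rw [← Finset.insert_Icc_right_eq_Icc_add_one (by omega), Finset.sum_insert (by simp), ih]
      push_cast
      field_simp
      ring
  rw [key]
  have : (0 : ℝ) ≤ ((n : ℝ) + 1)⁻¹ := by positivity
  linarith

/-- Partial summation: `1 / a ≥ ∑_{a ≤ m ≤ n} 1 / (m * (m + 1))` turns the sum over ideals into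
`∑_{m ≤ n} N(m) / (m * (m + 1))`, a harmonic sum when `N(m) ≥ c * m`. -/
lemma log_le_sum_inv_absNorm {c : ℝ} (hc : 0 < c)
    (h : ∀ m : ℕ, 1 ≤ m → c * m ≤ #(idealsUpTo k m)) {n : ℕ} (hn : 1 ≤ n) :
    c / 2 * Real.log n ≤ ∑ I ∈ idealsUpTo k n, (Ideal.absNorm I : ℝ)⁻¹ := by
  calc c / 2 * Real.log n ≤ c / 2 * Real.log ↑(n + 1) := by
        have : (0 : ℝ) < n := by exact_mod_cast hn
        gcongr
        omega
    _ ≤ c / 2 * harmonic n := by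
        gcongr
        exact log_add_one_le_harmonic n
    _ = ∑ m ∈ Icc 1 n, c / 2 * (m : ℝ)⁻¹ := by
        rw [harmonic_eq_sum_Icc, ← Finset.mul_sum]
        push_cast
        rfl
    _ ≤ ∑ m ∈ Icc 1 n, #(idealsUpTo k m) * ((m : ℝ) * (m + 1))⁻¹ := by
        refine Finset.sum_le_sum fun m hm => ?_
        have hm1 := (Finset.mem_Icc.mp hm).1
        have hm' : (1 : ℝ) ≤ m := by exact_mod_cast hm1
        calc c / 2 * (m : ℝ)⁻¹ ≤ c * m * ((m : ℝ) * (m + 1))⁻¹ := by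
              rw [show c * m * ((m : ℝ) * (m + 1))⁻¹ = c * ((m : ℝ) + 1)⁻¹ by field_simp,
                show c / 2 * (m : ℝ)⁻¹ = c * (2 * (m : ℝ))⁻¹ by field_simp]
              gcongr
              linarith
          _ ≤ _ := by
              gcongr
              exact h m hm1
    _ = ∑ m ∈ Icc 1 n, ∑ I ∈ idealsUpTo k m, ((m : ℝ) * (m + 1))⁻¹ := by simp
    _ = ∑ I ∈ idealsUpTo k n, ∑ m ∈ Icc (Ideal.absNorm I) n, ((m : ℝ) * (m + 1))⁻¹ := by
        refine Finset.sum_comm' fun m I => ?_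
        simp only [Finset.mem_Icc, mem_idealsUpTo]
        constructor
        · rintro ⟨⟨_, _⟩, h0, _⟩
          exact ⟨⟨by omega, by omega⟩, h0, by omega⟩
        · rintro ⟨⟨_, _⟩, h0, _⟩
          have := one_le_absNorm h0
          exact ⟨⟨by omega, by omega⟩, h0, by omega⟩
    _ ≤ _ := Finset.sum_le_sum fun I hI =>
        sum_Icc_inv_mul_succ_le (one_le_absNorm (mem_idealsUpTo.mp hI).1)

lemma log_idealNorm_primeProdUpTo_le {n : ℕ} (hn : 1 ≤ n) :
    Real.log (idealNorm (primeProdUpTo (𝓞 k) n)) ≤ #(idealsUpTo k n) * n := by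
  have h1 : idealNorm (primeProdUpTo (𝓞 k) n) ≤ n ^ #(idealsUpTo k n) := by
    rw [idealNorm_eq_absNorm, primeProdUpTo_eq_prod, map_prod]
    classical
    refine (Finset.prod_le_pow_card _ _ n fun p hp => (mem_primesUpTo.mp hp).2.2).trans ?_
    exact Nat.pow_le_pow_right hn (Finset.card_le_card (Finset.filter_subset _ _))
  have h2 : 0 < idealNorm (primeProdUpTo (𝓞 k) n) := by
    rw [idealNorm_eq_absNorm, primeProdUpTo_eq_prod, map_prod]
    exact Finset.prod_pos fun p hp => one_le_absNorm (mem_primesUpTo.mp hp).2.1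
  calc Real.log (idealNorm (primeProdUpTo (𝓞 k) n))
      ≤ Real.log ((n : ℝ) ^ #(idealsUpTo k n)) :=
        Real.log_le_log (by exact_mod_cast h2) (by exact_mod_cast h1)
    _ = #(idealsUpTo k n) * Real.log n := Real.log_pow _ _
    _ ≤ _ := by
        gcongr
        exact Real.log_le_self (by positivity)

end

/-- **Lemma (lower bound for θ).**
Let `A` be the ring of integers of a number field `k` and, for `n ≥ 2`, let
`𝔞_n = ∏_{|𝔭| ≤ n} 𝔭`. Then there is a constant `C₂ > 0` such that
`θ(𝔞_n) ≥ C₂ · log log |𝔞_n|` for all `n ≥ 2`. -/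
theorem theta_lower_bound (k : Type*) [Field k] [NumberField k] :
    ∃ C₂ : ℝ, 0 < C₂ ∧ ∀ n : ℕ, 2 ≤ n →
      C₂ * Real.log (Real.log (idealNorm (primeProdUpTo (𝓞 k) n)))
        ≤ theta (primeProdUpTo (𝓞 k) n) := by
  obtain ⟨c, C, hc, hC, hN⟩ := exists_card_idealsUpTo_bounds k
  have hl2 : 0 < Real.log 2 := Real.log_pos one_lt_two
  have hlC : 0 ≤ Real.log C := Real.log_nonneg hC
  -- for `n ≥ 2`, `log C + 2 * log n ≤ D * log n`
  set D : ℝ := Real.log C / Real.log 2 + 2 with hD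
  have hD0 : 0 < D := by positivity
  refine ⟨c / 2 / D, by positivity, fun n hn => ?_⟩
  have hn2 : (2 : ℝ) ≤ n := by exact_mod_cast hn
  have hln : Real.log 2 ≤ Real.log n := Real.log_le_log two_pos hn2
  have hub : Real.log (Real.log (idealNorm (primeProdUpTo (𝓞 k) n))) ≤ D * Real.log n := by
    have hle : Real.log (idealNorm (primeProdUpTo (𝓞 k) n)) ≤ C * n ^ 2 := by
      refine (log_idealNorm_primeProdUpTo_le (by omega)).trans ?_
      calc (#(idealsUpTo k n) : ℝ) * n ≤ C * n * n := by
            gcongr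
            exact (hN n (by omega)).2
        _ = _ := by ring
    rcases (Real.log_natCast_nonneg (idealNorm (primeProdUpTo (𝓞 k) n))).eq_or_lt with h0 | h0
    -- if no prime has norm at most `n`, then `|𝔞_n| = 1`, and `log (log 1) = 0` by convention
    · rw [← h0, Real.log_zero]
      have := hl2.trans_le hln
      positivity
    · calc Real.log (Real.log (idealNorm (primeProdUpTo (𝓞 k) n)))
          ≤ Real.log (C * (n : ℝ) ^ 2) := Real.log_le_log h0 hle
        _ = Real.log C + 2 * Real.log n := by
            rw [Real.log_mul (by positivity) (by positivity), Real.log_pow]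
            norm_num
        _ = Real.log C / Real.log 2 * Real.log 2 + 2 * Real.log n := by field_simp
        _ ≤ Real.log C / Real.log 2 * Real.log n + 2 * Real.log n := by gcongr
        _ = D * Real.log n := by rw [hD]; ring
  calc c / 2 / D * Real.log (Real.log (idealNorm (primeProdUpTo (𝓞 k) n)))
      ≤ c / 2 / D * (D * Real.log n) := by gcongr
    _ = c / 2 * Real.log n := by field_simp
    _ ≤ ∑ I ∈ idealsUpTo k n, (Ideal.absNorm I : ℝ)⁻¹ :=
        log_le_sum_inv_absNorm hc (fun m hm => (hN m hm).1) (by omega)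
    _ ≤ ∏ p ∈ primesUpTo k n, (1 - (Ideal.absNorm p : ℝ)⁻¹)⁻¹ := sum_inv_absNorm_le_prod n
    _ = theta (primeProdUpTo (𝓞 k) n) := (theta_primeProdUpTo n).symm
end

section
/- Let A be a Dedekind domain which is not a field such that A/𝔞 is finite for every nonzero ideal 𝔞 ⊆ A, let 𝔞 ⊆ A be a nonzero ideal, let r ≥ 2, and let H ⊆ (A/𝔞)^r be an A-submodule isomorphic to A/𝔞 as an A-module. Then the setwise stabilizer Stab(H) := {g ∈ GL_r(A/𝔞) : g·H = H} has index [GL_r(A/𝔞) : Stab(H)] = |𝔞|^{r-1}·∏_{𝔭 | 𝔞} (1 - |𝔭|^{-r})·(1 - |𝔭|^{-1})^{-1}, the product being over the nonzero prime ideals 𝔭 dividing 𝔞. -/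
/-- The setwise stabilizer of an `A`-submodule `H ⊆ (A ⧸ 𝔞)^r` in `GL_r(A ⧸ 𝔞)`:
the invertible matrices `g` with `g • H = H`. -/
def glSetStabilizer {A : Type*} [CommRing A] (𝔞 : Ideal A) (r : ℕ)
    (H : Submodule A (Fin r → A ⧸ 𝔞)) : Subgroup (GL (Fin r) (A ⧸ 𝔞)) where
  carrier := {g | (fun v => Matrix.mulVec (g : Matrix (Fin r) (Fin r) (A ⧸ 𝔞)) v) ''
    (H : Set (Fin r → A ⧸ 𝔞)) = (H : Set (Fin r → A ⧸ 𝔞))}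
  one_mem' := by
    simp only [Set.mem_setOf_eq, Units.val_one, Matrix.one_mulVec]
    exact Set.image_id _
  mul_mem' := by
    intro a b ha hb
    simp only [Set.mem_setOf_eq, Units.val_mul] at *
    rw [show (fun v => Matrix.mulVec ((a : Matrix (Fin r) (Fin r) (A ⧸ 𝔞)) *
        (b : Matrix (Fin r) (Fin r) (A ⧸ 𝔞))) v)
      = (fun v => Matrix.mulVec (a : Matrix (Fin r) (Fin r) (A ⧸ 𝔞)) v) ∘
        (fun v => Matrix.mulVec (b : Matrix (Fin r) (Fin r) (A ⧸ 𝔞)) v) from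
        funext fun v => (Matrix.mulVec_mulVec v _ _).symm,
      Set.image_comp, hb, ha]
  inv_mem' := by
    intro a ha
    simp only [Set.mem_setOf_eq] at *
    conv_lhs => rw [← ha]
    rw [← Set.image_comp]
    convert Set.image_id _ using 1
    apply Set.image_congr
    intro v _
    simp [Matrix.mulVec_mulVec]

open Matrix

/-! ### Unimodular vectors over a ring with finitely many residue fields -/

/-- A vector `w` over `R` is unimodular with respect to a family of residue maps `φ : R → ∏ F i` if
its image in each `(F i)^n` is nonzero. -/
def IsUnimod {R ι n : Type*} {F : ι → Type*} [CommRing R] [∀ i, Field (F i)]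
    (φ : R →+* ∀ i, F i) (w : n → R) : Prop := ∀ i, ∃ j, φ (w j) i ≠ 0

/-- The preimage of a set under a surjective homomorphism of finite groups has the expected
density. -/
lemma card_preimage_mul_card {M N : Type*} [AddGroup M] [AddGroup N] [Finite M] [Finite N]
    (f : M →+ N) (hf : Function.Surjective f) (p : N → Prop) :
    Nat.card {x // p (f x)} * Nat.card N = Nat.card M * Nat.card {y // p y} := by
  classical
  have := Fintype.ofFinite M
  have := Fintype.ofFinite N
  have key : ∀ q : N → Prop, Nat.card {x // q (f x)}
      = Nat.card {y // q y} * (Finset.univ.filter (fun x => f x = 0)).card := by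
    intro q
    rw [Nat.card_eq_fintype_card, Nat.card_eq_fintype_card, Fintype.card_subtype,
      Fintype.card_subtype]
    rw [Finset.card_eq_sum_card_fiberwise (f := f) (t := Finset.univ.filter q)
      (by intro x hx; simpa using hx)]
    rw [← smul_eq_mul, ← Finset.sum_const]
    refine Finset.sum_congr rfl fun y hy => ?_
    rw [← AddMonoidHom.card_fiber_eq_of_mem_range f (hf y) (hf 0)]
    congr 1
    ext x
    simp only [Finset.mem_filter, Finset.mem_univ, true_and] at hy ⊢
    exact ⟨fun h => h.2, fun h => ⟨h ▸ hy, h⟩⟩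
  have h1 := key p
  have h2 := key (fun _ => True)
  rw [Nat.card_congr (Equiv.subtypeUnivEquiv (fun _ => trivial)),
    Nat.card_congr (Equiv.subtypeUnivEquiv (fun _ => trivial))] at h2
  rw [h1, h2]
  ring

/-- The number of unimodular vectors of length `n` is `|R|^n ∏ (|F i|^n - 1) / |F i|^n`: they are
the preimage, under the surjection `R^n → ∏ (F i)^n`, of the tuples of nonzero vectors. -/
lemma card_isUnimod {R ι n : Type*} {F : ι → Type*} [CommRing R] [∀ i, Field (F i)]
    [Fintype ι] [Fintype n] [Finite R] [∀ i, Finite (F i)]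
    (φ : R →+* ∀ i, F i) (hφ : Function.Surjective φ) :
    Nat.card {w : n → R // IsUnimod φ w} * ∏ i, Nat.card (F i) ^ Fintype.card n
      = Nat.card R ^ Fintype.card n * ∏ i, (Nat.card (F i) ^ Fintype.card n - 1) := by
  classical
  let f : (n → R) →+ (∀ i, n → F i) :=
    { toFun := fun w i j => φ (w j) i
      map_zero' := by ext; simp
      map_add' := by intros; ext; simp }
  have hf : Function.Surjective f := by
    intro y
    choose w hw using fun j => hφ (fun i => y i j)
    exact ⟨w, by ext i j; exact congrFun (hw j) i⟩
  have h := card_preimage_mul_card f hf (fun y => ∀ i, y i ≠ 0)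
  have e : Nat.card {y : ∀ i, n → F i // ∀ i, y i ≠ 0}
      = ∏ i, (Nat.card (F i) ^ Fintype.card n - 1) := by
    rw [Nat.card_congr (Equiv.subtypePiEquivPi (p := fun i (y : n → F i) => y ≠ 0)), Nat.card_pi]
    refine Finset.prod_congr rfl fun i _ => ?_
    have := Fintype.ofFinite (F i)
    rw [Nat.card_eq_fintype_card, Fintype.card_subtype_compl, Fintype.card_subtype_eq,
      Fintype.card_fun, Nat.card_eq_fintype_card]
  rw [e, Nat.card_pi] at h
  simp only [Nat.card_fun, Nat.card_eq_fintype_card (α := n)] at h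
  rw [← h]
  congr 1
  refine Nat.card_congr (Equiv.subtypeEquivRight fun w => ?_)
  simp only [IsUnimod, Function.ne_iff]
  rfl

/-- The units of `R` are the unimodular vectors of length one. -/
lemma card_units_eq_card_isUnimod {R ι : Type*} {F : ι → Type*} [CommRing R] [∀ i, Field (F i)]
    (φ : R →+* ∀ i, F i) (hu : ∀ x, (∀ i, φ x i ≠ 0) → IsUnit x) :
    Nat.card Rˣ = Nat.card {w : Unit → R // IsUnimod φ w} := by
  refine Nat.card_congr (Equiv.ofBijective (fun u => ⟨fun _ => (u : R), fun i => ⟨(), ?_⟩⟩) ⟨?_, ?_⟩)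
  · exact ((u.isUnit.map φ).map (Pi.evalRingHom F i)).ne_zero
  · intro u v h
    exact Units.ext (congrFun (congrArg Subtype.val h) ())
  · rintro ⟨w, hw⟩
    obtain ⟨u, hu⟩ := hu (w ()) fun i => by obtain ⟨⟨⟩, h⟩ := hw i; exact h
    exact ⟨u, Subtype.ext (funext fun _ => hu)⟩

/-! ### Transitivity of `GL_r` on unimodular vectors -/

/-- Over a field, a nonzero vector is a prescribed column of some invertible matrix. -/
lemma exists_det_ne_zero_col {K n : Type*} [Field K] [Fintype n] [DecidableEq n]
    (x : n → K) (hx : ∃ k, x k ≠ 0) (j : n) :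
    ∃ M : Matrix n n K, M.det ≠ 0 ∧ ∀ a, M a j = x a := by
  obtain ⟨k, hk⟩ := hx
  -- The identity matrix with its `k`-th column replaced by `x`, then columns `j` and `k` swapped.
  refine ⟨((1 : Matrix n n K).updateCol k x).submatrix id (Equiv.swap j k), ?_, ?_⟩
  · rw [Matrix.det_permute', ← Matrix.cramer_apply, Matrix.cramer_one]
    refine mul_ne_zero ?_ hk
    rcases Int.units_eq_one_or (Equiv.Perm.sign (Equiv.swap j k)) with h | h <;> simp [h]
  · intro a
    simp

lemma exists_gl_mulVec_single {R ι n : Type*} {F : ι → Type*} [CommRing R] [∀ i, Field (F i)]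
    [Fintype n] [DecidableEq n]
    (φ : R →+* ∀ i, F i) (hφ : Function.Surjective φ) (hu : ∀ x, (∀ i, φ x i ≠ 0) → IsUnit x)
    (j : n) (w : n → R) (hw : IsUnimod φ w) :
    ∃ g : GL n R, (g : Matrix n n R) *ᵥ Pi.single j 1 = w := by
  choose M hM hMw using fun i => exists_det_ne_zero_col (fun a => φ (w a) i) (hw i) j
  choose N hN using fun a b => hφ (fun i => M i a b)
  have hdet : IsUnit (Matrix.updateCol (Matrix.of N) j w).det := by
    refine hu _ fun i => ?_
    have : φ (Matrix.updateCol (Matrix.of N) j w).det i = (M i).det := by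
      change ((Pi.evalRingHom F i).comp φ) _ = _
      rw [RingHom.map_det]
      congr 1
      ext a b
      by_cases hb : b = j
      · subst hb
        simp [hMw]
      · simp [Matrix.updateCol_ne hb, hN]
    rw [this]
    exact hM i
  refine ⟨Matrix.GeneralLinearGroup.mk'' _ hdet, ?_⟩
  change Matrix.updateCol (Matrix.of N) j w *ᵥ Pi.single j 1 = w
  ext a
  simp

lemma exists_gl_mulVec_eq {R ι n : Type*} {F : ι → Type*} [CommRing R] [∀ i, Field (F i)]
    [Fintype n] [DecidableEq n] [Nonempty n]
    (φ : R →+* ∀ i, F i) (hφ : Function.Surjective φ) (hu : ∀ x, (∀ i, φ x i ≠ 0) → IsUnit x)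
    (v w : n → R) (hv : IsUnimod φ v) (hw : IsUnimod φ w) :
    ∃ g : GL n R, (g : Matrix n n R) *ᵥ v = w := by
  obtain ⟨g, hg⟩ := exists_gl_mulVec_single φ hφ hu (Classical.arbitrary n) v hv
  obtain ⟨h, hh⟩ := exists_gl_mulVec_single φ hφ hu (Classical.arbitrary n) w hw
  refine ⟨h * g⁻¹, ?_⟩
  rw [← hg, Matrix.mulVec_mulVec, ← Units.val_mul, inv_mul_cancel_right, hh]

/-- Invertible matrices preserve unimodularity: if `g v` vanishes in a residue field,
so does `v = g⁻¹ (g v)`. -/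
lemma IsUnimod.mulVec {R ι n : Type*} {F : ι → Type*} [CommRing R] [∀ i, Field (F i)]
    [Fintype n] [DecidableEq n] {φ : R →+* ∀ i, F i}
    {v : n → R} (hv : IsUnimod φ v) (g : GL n R) :
    IsUnimod φ ((g : Matrix n n R) *ᵥ v) := by
  intro i
  by_contra! h
  obtain ⟨j, hj⟩ := hv i
  apply hj
  have : v = ((g⁻¹ : GL n R) : Matrix n n R) *ᵥ ((g : Matrix n n R) *ᵥ v) := by
    rw [Matrix.mulVec_mulVec, ← Units.val_mul, inv_mul_cancel, Units.val_one, Matrix.one_mulVec]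
  rw [this, Matrix.mulVec, dotProduct, map_sum, Finset.sum_apply]
  exact Finset.sum_eq_zero fun k _ => by rw [map_mul, Pi.mul_apply, h k, mul_zero]

/-! ### Orbits of vectors and the stabilizer of a cyclic submodule -/

/-- The action of `GL_n(R)` on column vectors. -/
abbrev glVecAction (n R : Type*) [CommRing R] [Fintype n] [DecidableEq n] :
    MulAction (GL n R) (n → R) where
  smul g v := (g : Matrix n n R) *ᵥ v
  one_smul v := by
    change ((1 : GL n R) : Matrix n n R) *ᵥ v = v
    rw [Units.val_one, Matrix.one_mulVec]
  mul_smul g h v := by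
    change ((g * h : GL n R) : Matrix n n R) *ᵥ v = _
    rw [Units.val_mul, ← Matrix.mulVec_mulVec]
    rfl

/-- If `H = R v` with `v` of trivial annihilator, orbit counting along
`Stab(v) ≤ Stab(H) ≤ GL_r(R)` shows that `|Rˣ|` times the index of `Stab(H)` is the size of the
`GL_r(R)`-orbit of `v`. -/
lemma card_units_mul_index {A : Type*} [CommRing A] (𝔞 : Ideal A) (r : ℕ)
    (H : Submodule A (Fin r → A ⧸ 𝔞)) (v : Fin r → A ⧸ 𝔞)
    (hH : ∀ x, x ∈ H ↔ ∃ c : A ⧸ 𝔞, x = c • v) (hv : ∀ c : A ⧸ 𝔞, c • v = 0 → c = 0) :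
    Nat.card (A ⧸ 𝔞)ˣ * (glSetStabilizer 𝔞 r H).index
      = {w | ∃ g : GL (Fin r) (A ⧸ 𝔞), (g : Matrix (Fin r) (Fin r) (A ⧸ 𝔞)) *ᵥ v = w}.ncard := by
  letI := glVecAction (Fin r) (A ⧸ 𝔞)
  have smul_def : ∀ (g : GL (Fin r) (A ⧸ 𝔞)) (x : Fin r → A ⧸ 𝔞),
    g • x = (g : Matrix (Fin r) (Fin r) (A ⧸ 𝔞)) *ᵥ x := fun _ _ => rfl
  set T := glSetStabilizer 𝔞 r H with hT
  have inj : ∀ c d : A ⧸ 𝔞, c • v = d • v → c = d := fun c d h =>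
    sub_eq_zero.mp (hv _ (by rw [sub_smul, h, sub_self]))
  -- A matrix scaling `v` by a unit maps `R v` onto itself.
  have hmem : ∀ (g : GL (Fin r) (A ⧸ 𝔞)) (u : (A ⧸ 𝔞)ˣ),
      (g : Matrix (Fin r) (Fin r) (A ⧸ 𝔞)) *ᵥ v = (u : A ⧸ 𝔞) • v → g ∈ T := by
    intro g u h
    change _ '' _ = _
    ext x
    simp only [Set.mem_image, SetLike.mem_coe]
    constructor
    · rintro ⟨y, hy, rfl⟩
      obtain ⟨c, rfl⟩ := (hH y).1 hy
      exact (hH _).2 ⟨c * u, by rw [Matrix.mulVec_smul, h, smul_smul]⟩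
    · intro hx
      obtain ⟨c, rfl⟩ := (hH x).1 hx
      exact ⟨(c * ((u⁻¹ : (A ⧸ 𝔞)ˣ) : A ⧸ 𝔞)) • v, (hH _).2 ⟨_, rfl⟩, by
        rw [Matrix.mulVec_smul, h, smul_smul, mul_assoc, Units.inv_mul, mul_one]⟩
  have hle : MulAction.stabilizer (GL (Fin r) (A ⧸ 𝔞)) v ≤ T := by
    intro g hg
    exact hmem g 1 (by rw [Units.val_one, one_smul]; exact hg)
  have h1 := Subgroup.relIndex_mul_index hle
  rw [MulAction.index_stabilizer] at h1
  have h2 : (MulAction.stabilizer (GL (Fin r) (A ⧸ 𝔞)) v).relIndex T = Nat.card (A ⧸ 𝔞)ˣ := by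
    have : (MulAction.stabilizer (GL (Fin r) (A ⧸ 𝔞)) v).subgroupOf T
        = MulAction.stabilizer T v := by
      ext g; rfl
    rw [Subgroup.relIndex, this, MulAction.index_stabilizer]
    have horb : MulAction.orbit T v = Set.range (fun u : (A ⧸ 𝔞)ˣ => (u : A ⧸ 𝔞) • v) := by
      ext x
      constructor
      · rintro ⟨⟨g, hg⟩, rfl⟩
        have hg' : (fun x => (g : Matrix (Fin r) (Fin r) (A ⧸ 𝔞)) *ᵥ x) ''
            (H : Set (Fin r → A ⧸ 𝔞))
          = (H : Set (Fin r → A ⧸ 𝔞)) := hg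
        have hvH : v ∈ H := (hH v).2 ⟨1, (one_smul _ _).symm⟩
        have hgv : (g : Matrix (Fin r) (Fin r) (A ⧸ 𝔞)) *ᵥ v ∈ (H : Set (Fin r → A ⧸ 𝔞)) := by
          rw [← hg']
          exact ⟨v, hvH, rfl⟩
        obtain ⟨c, hc⟩ := (hH _).1 hgv
        have hvg : v ∈ (fun x => (g : Matrix (Fin r) (Fin r) (A ⧸ 𝔞)) *ᵥ x) ''
            (H : Set (Fin r → A ⧸ 𝔞)) := by
          rw [hg']
          exact hvH
        obtain ⟨y, hy, hyv⟩ := hvg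
        obtain ⟨d, rfl⟩ := (hH y).1 hy
        have hdc : d * c = 1 := inj _ _ (by
          rw [one_smul, ← smul_smul, ← hc, ← Matrix.mulVec_smul]
          exact hyv)
        exact ⟨⟨c, d, by rw [mul_comm, hdc], hdc⟩, hc.symm⟩
      · rintro ⟨u, rfl⟩
        -- The scalar matrix `u` stabilizes `H` and sends `v` to `u v`.
        let g : GL (Fin r) (A ⧸ 𝔞) := Units.map (Matrix.scalar (Fin r)).toMonoidHom u
        have hg : (g : Matrix (Fin r) (Fin r) (A ⧸ 𝔞)) *ᵥ v = (u : A ⧸ 𝔞) • v := by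
          change Matrix.scalar (Fin r) (u : A ⧸ 𝔞) *ᵥ v = _
          ext a
          simp [Matrix.mulVec_diagonal]
        exact ⟨⟨g, hmem g u hg⟩, hg⟩
    rw [horb, ← Set.image_univ, Set.ncard_image_of_injective _ (fun u u' h =>
      Units.ext (inj _ _ h)), Set.ncard_univ]
  rw [← h2, h1]
  rfl

/-! ### Residue fields of `A ⧸ 𝔞` -/

/-- With `𝔞 = 𝔭 𝔠`, an element of `𝔠` outside `𝔞` kills every vector with coordinates in `𝔭`, so a
vector with trivial annihilator modulo `𝔞` has a coordinate outside `𝔭`. -/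
lemma exists_notMem_of_annihilator {A : Type*} [CommRing A] [IsDedekindDomain A]
    {𝔞 𝔭 : Ideal A} (h𝔞 : 𝔞 ≠ ⊥) (h𝔭 : 𝔭 ≠ ⊤) (hdvd : 𝔭 ∣ 𝔞) {n : Type*} (x : n → A)
    (hx : ∀ c : A, (∀ j, c * x j ∈ 𝔞) → c ∈ 𝔞) : ∃ j, x j ∉ 𝔭 := by
  by_contra! h
  obtain ⟨𝔠, rfl⟩ := hdvd
  have hle : 𝔠 ≤ 𝔭 * 𝔠 := fun c hc => hx c fun j => by
    rw [mul_comm c]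
    exact Ideal.mul_mem_mul (h j) hc
  have h𝔠 : 𝔠 ≠ 0 := by
    rintro rfl
    exact h𝔞 (mul_zero _)
  have heq : 𝔭 * 𝔠 = 1 * 𝔠 := by
    rw [one_mul]
    exact le_antisymm Ideal.mul_le_right hle
  exact h𝔭 ((mul_right_cancel₀ h𝔠 heq).trans Ideal.one_eq_top)

lemma finite_primesDvd {A : Type*} [CommRing A] (𝔞 : Ideal A) [Finite (A ⧸ 𝔞)] :
    (primesDvd 𝔞).Finite := by
  have : Finite (Ideal (A ⧸ 𝔞)) :=
    Finite.of_injective (fun I : Ideal (A ⧸ 𝔞) => (I : Set (A ⧸ 𝔞))) SetLike.coe_injective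
  refine (Set.finite_range (Ideal.comap (Ideal.Quotient.mk 𝔞))).subset ?_
  rintro 𝔭 ⟨-, -, h⟩
  refine ⟨𝔭.map (Ideal.Quotient.mk 𝔞), ?_⟩
  rw [Ideal.comap_map_of_surjective _ Ideal.Quotient.mk_surjective, ← RingHom.ker_eq_comap_bot,
    Ideal.mk_ker]
  exact sup_eq_left.2 (Ideal.le_of_dvd h)

/-- **Lemma (index of the stabilizer of a cyclic submodule in `GL_r(A ⧸ 𝔞)`).**
Let `A` be a Dedekind domain, not a field, all of whose proper quotients are finite, let
`𝔞 ⊆ A` be a nonzero ideal, `r ≥ 2`, and let `H ⊆ (A ⧸ 𝔞)^r` be an `A`-submodule with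
`H ≅ A ⧸ 𝔞`. Then the setwise stabilizer of `H` in `GL_r(A ⧸ 𝔞)` has index
`|𝔞|^(r-1) · ∏_{𝔭 ∣ 𝔞} (1 - |𝔭|^{-r}) · (1 - |𝔭|^{-1})⁻¹`. -/
theorem index_glSetStabilizer
    (A : Type*) [CommRing A] [IsDomain A] [IsDedekindDomain A] (hA : ¬IsField A)
    (hAfin : ∀ 𝔟 : Ideal A, 𝔟 ≠ ⊥ → Finite (A ⧸ 𝔟))
    (𝔞 : Ideal A) (h𝔞 : 𝔞 ≠ ⊥) (r : ℕ) (hr : 2 ≤ r)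
    (H : Submodule A (Fin r → A ⧸ 𝔞)) (hiso : Nonempty (H ≃ₗ[A] A ⧸ 𝔞)) :
    ((glSetStabilizer 𝔞 r H).index : ℝ)
      = (idealNorm 𝔞 : ℝ) ^ (r - 1) *
        ∏ᶠ 𝔭 ∈ primesDvd 𝔞,
          (1 - ((idealNorm 𝔭 : ℝ) ^ r)⁻¹) * (1 - (idealNorm 𝔭 : ℝ)⁻¹)⁻¹ := by
  classical
  have : Finite (A ⧸ 𝔞) := hAfin 𝔞 h𝔞
  have : Fintype (primesDvd 𝔞) := (finite_primesDvd 𝔞).fintype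
  have : NeZero r := ⟨by omega⟩
  have hmax : ∀ 𝔭 : primesDvd 𝔞, 𝔭.1.IsMaximal := fun 𝔭 => 𝔭.2.1.isMaximal 𝔭.2.2.1
  let : ∀ 𝔭 : primesDvd 𝔞, Field (A ⧸ 𝔭.1) := fun 𝔭 =>
    haveI := hmax 𝔭
    Ideal.Quotient.field 𝔭.1
  have : ∀ 𝔭 : primesDvd 𝔞, Finite (A ⧸ 𝔭.1) := fun 𝔭 => hAfin _ 𝔭.2.2.1
  let φ : A ⧸ 𝔞 →+* ∀ 𝔭 : primesDvd 𝔞, A ⧸ 𝔭.1 :=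
    RingHom.pi fun 𝔭 => Ideal.Quotient.factor (Ideal.le_of_dvd 𝔭.2.2.2)
  have φ_mk : ∀ x 𝔭, φ (Ideal.Quotient.mk 𝔞 x) 𝔭 = Ideal.Quotient.mk 𝔭.1 x := fun _ _ => rfl
  have hφ : Function.Surjective φ := by
    intro y
    obtain ⟨x, hx⟩ := Ideal.pi_quotient_surjective (I := fun 𝔭 : primesDvd 𝔞 => 𝔭.1)
      (fun 𝔭 𝔮 hne =>
        haveI := hmax 𝔭
        haveI := hmax 𝔮
        Ideal.isCoprime_of_isMaximal fun h => hne (Subtype.ext h)) y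
    exact ⟨Ideal.Quotient.mk 𝔞 x, funext hx⟩
  have hu : ∀ x, (∀ 𝔭, φ x 𝔭 ≠ 0) → IsUnit x := by
    intro x hx
    by_contra hnu
    -- A non-unit lies in a maximal ideal, whose preimage in `A` is a prime dividing `𝔞`.
    obtain ⟨M, hM, hxM⟩ := exists_max_ideal_of_mem_nonunits hnu
    have hle : 𝔞 ≤ M.comap (Ideal.Quotient.mk 𝔞) := fun a ha => by
      rw [Ideal.mem_comap, Ideal.Quotient.eq_zero_iff_mem.2 ha]
      exact M.zero_mem
    have hmem : M.comap (Ideal.Quotient.mk 𝔞) ∈ primesDvd 𝔞 :=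
      ⟨inferInstance, fun h => h𝔞 (le_bot_iff.1 (h ▸ hle)), Ideal.dvd_iff_le.2 hle⟩
    obtain ⟨x, rfl⟩ := Ideal.Quotient.mk_surjective x
    exact hx ⟨_, hmem⟩ (Ideal.Quotient.eq_zero_iff_mem.2 hxM)
  obtain ⟨e⟩ := hiso
  let v : Fin r → A ⧸ 𝔞 := (e.symm 1 : H)
  have mk_smul : ∀ (a : A) (x : Fin r → A ⧸ 𝔞), Ideal.Quotient.mk 𝔞 a • x = a • x := by
    intro a x
    ext j
    simp [Algebra.smul_def]
  have hH : ∀ x, x ∈ H ↔ ∃ c : A ⧸ 𝔞, x = c • v := by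
    intro x
    constructor
    · intro hx
      obtain ⟨a, ha⟩ := Ideal.Quotient.mk_surjective (e ⟨x, hx⟩)
      refine ⟨Ideal.Quotient.mk 𝔞 a, ?_⟩
      have : (⟨x, hx⟩ : H) = a • e.symm 1 := by
        rw [← map_smul, LinearEquiv.eq_symm_apply, ← ha, Algebra.smul_def, mul_one]
        rfl
      rw [mk_smul]
      exact congrArg Subtype.val this
    · rintro ⟨c, rfl⟩
      obtain ⟨a, rfl⟩ := Ideal.Quotient.mk_surjective c
      rw [mk_smul]
      exact H.smul_mem _ (e.symm 1).2
  have hv : ∀ c : A ⧸ 𝔞, c • v = 0 → c = 0 := by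
    intro c hc
    obtain ⟨a, rfl⟩ := Ideal.Quotient.mk_surjective c
    rw [mk_smul] at hc
    have : a • e.symm 1 = 0 := Subtype.ext hc
    rw [← map_smul, LinearEquiv.map_eq_zero_iff, Algebra.smul_def, mul_one] at this
    exact this
  have hvu : IsUnimod φ v := by
    intro 𝔭
    choose x hx using fun j => Ideal.Quotient.mk_surjective (v j)
    obtain ⟨j, hj⟩ := exists_notMem_of_annihilator h𝔞 (hmax 𝔭).ne_top 𝔭.2.2.2 x (by
      intro c hc
      rw [← Ideal.Quotient.eq_zero_iff_mem]
      refine hv _ (funext fun j => ?_)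
      rw [Pi.smul_apply, ← hx j, smul_eq_mul, ← map_mul, Ideal.Quotient.eq_zero_iff_mem.2 (hc j)]
      rfl)
    refine ⟨j, fun h => hj ?_⟩
    rw [← hx j, φ_mk] at h
    exact Ideal.Quotient.eq_zero_iff_mem.1 h
  have horb : {w | ∃ g : GL (Fin r) (A ⧸ 𝔞), (g : Matrix (Fin r) (Fin r) (A ⧸ 𝔞)) *ᵥ v = w}
      = {w | IsUnimod φ w} := by
    ext w
    constructor
    · rintro ⟨g, rfl⟩
      exact hvu.mulVec g
    · exact fun hw => exists_gl_mulVec_eq φ hφ hu v w hvu hw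
  have hidx := card_units_mul_index 𝔞 r H v hH hv
  have hUr := card_isUnimod (n := Fin r) φ hφ
  have hU1 := card_isUnimod (n := Unit) φ hφ
  rw [← card_units_eq_card_isUnimod φ hu] at hU1
  rw [horb, ← Nat.card_coe_set_eq] at hidx
  rw [show Nat.card {w : Fin r → A ⧸ 𝔞 // IsUnimod φ w} = _ from hidx.symm] at hUr
  simp only [Fintype.card_fin, Fintype.card_unit, pow_one] at hUr hU1
  rw [← finprod_set_coe_eq_finprod_mem (primesDvd 𝔞) (f := fun 𝔭 : Ideal A =>
      (1 - ((idealNorm 𝔭 : ℝ) ^ r)⁻¹) * (1 - (idealNorm 𝔭 : ℝ)⁻¹)⁻¹),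
    finprod_eq_prod_of_fintype]
  have hq : ∀ 𝔭 : primesDvd 𝔞, 1 < Nat.card (A ⧸ 𝔭.1) := fun 𝔭 => Finite.one_lt_card
  have hqR : ∀ 𝔭 : primesDvd 𝔞, (1 : ℝ) < Nat.card (A ⧸ 𝔭.1) := fun 𝔭 => by exact_mod_cast hq 𝔭
  have castpow : ∀ k : ℕ, ((∏ 𝔭 : primesDvd 𝔞, (Nat.card (A ⧸ 𝔭.1) ^ k - 1) : ℕ) : ℝ)
      = (∏ 𝔭 : primesDvd 𝔞, (Nat.card (A ⧸ 𝔭.1) : ℝ) ^ k)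
        * ∏ 𝔭 : primesDvd 𝔞, (1 - ((Nat.card (A ⧸ 𝔭.1) : ℝ) ^ k)⁻¹) := by
    intro k
    rw [Nat.cast_prod, ← Finset.prod_mul_distrib]
    refine Finset.prod_congr rfl fun 𝔭 _ => ?_
    have h0 : (Nat.card (A ⧸ 𝔭.1) : ℝ) ≠ 0 := by linarith [hqR 𝔭]
    rw [Nat.cast_sub (Nat.one_le_pow _ _ (by linarith [hq 𝔭]))]
    push_cast
    field_simp
  have prod_ne : ∀ k : ℕ, (∏ 𝔭 : primesDvd 𝔞, (Nat.card (A ⧸ 𝔭.1) : ℝ) ^ k) ≠ 0 := fun k =>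
    Finset.prod_ne_zero_iff.2 fun 𝔭 _ => pow_ne_zero _ (by linarith [hqR 𝔭])
  have castU : ∀ m k : ℕ, m * ∏ 𝔭 : primesDvd 𝔞, Nat.card (A ⧸ 𝔭.1) ^ k
      = Nat.card (A ⧸ 𝔞) ^ k * ∏ 𝔭 : primesDvd 𝔞, (Nat.card (A ⧸ 𝔭.1) ^ k - 1) →
      (m : ℝ) = (Nat.card (A ⧸ 𝔞) : ℝ) ^ k
        * ∏ 𝔭 : primesDvd 𝔞, (1 - ((Nat.card (A ⧸ 𝔭.1) : ℝ) ^ k)⁻¹) := by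
    intro m k h
    have h' := congrArg (Nat.cast : ℕ → ℝ) h
    rw [Nat.cast_mul, Nat.cast_mul, castpow] at h'
    push_cast at h'
    apply mul_right_cancel₀ (prod_ne k)
    rw [h']
    ring
  have eU1 := castU _ 1 (by simpa using hU1)
  have eUr := castU _ r hUr
  simp only [pow_one] at eU1
  rw [Nat.cast_mul, eU1] at eUr
  have hR : (Nat.card (A ⧸ 𝔞) : ℝ) ≠ 0 := by exact_mod_cast Nat.card_pos.ne'
  have hP : ∏ 𝔭 : primesDvd 𝔞, (1 - ((Nat.card (A ⧸ 𝔭.1) : ℝ))⁻¹) ≠ 0 :=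
    Finset.prod_ne_zero_iff.2 fun 𝔭 _ => (sub_pos.2 (inv_lt_one_of_one_lt₀ (hqR 𝔭))).ne'
  rw [Finset.prod_mul_distrib, Finset.prod_inv_distrib]
  simp only [idealNorm]
  apply mul_left_cancel₀ (mul_ne_zero hR hP)
  rw [eUr]
  obtain ⟨s, rfl⟩ : ∃ s, r = s + 1 := ⟨r - 1, by omega⟩
  rw [Nat.add_sub_cancel]
  generalize ∏ 𝔭 : primesDvd 𝔞, (1 - ((Nat.card (A ⧸ 𝔭.1) : ℝ))⁻¹) = P at hP ⊢
  rw [mul_mul_mul_comm, pow_succ']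
  field_simp
end
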